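/- For every n ≥ 2, the Riordan number Rₙ equals the sum, over all partitions λ = (λ₁ ≥ λ₂ ≥ λ₃ ≥ 0) of n into at most three parts with λ₁ ≡ λ₂ ≡ λ₃ (mod 2), of the number of standard Young tableaux of shape λ. (This is the dimension count resulting from the Sₙ-module decomposition Inv(sl₂^{⊗n}) ≅ ⊕ V_λ over such partitions λ.) -/

import Mathlib

/- For every n ≥ 2, the Riordan number Rₙ equals the sum, over all partitions
   λ = (λ₁ ≥ λ₂ ≥ λ₃ ≥ 0) of n into at most three parts with
   λ₁ ≡ λ₂ ≡ λ₃ (mod 2), of the number of standard Young tableaux of shape λ.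
   The Riordan numbers are quantified via their defining recurrence. -/

noncomputable section

/-- The number of standard Young tableaux of the shape given by the row-length
function `lam : ℕ → ℕ`: fillings `T` of the diagram `{(i,j) | j < lam i}` by
the numbers `1,…,n`, each used exactly once, strictly increasing along rows and
columns (and `0` outside the diagram). -/
def numSYT (lam : ℕ → ℕ) (n : ℕ) : ℕ :=
  Nat.card {T : ℕ × ℕ → ℕ //
    Set.BijOn T {p : ℕ × ℕ | p.2 < lam p.1} (Set.Icc 1 n) ∧
    (∀ p : ℕ × ℕ, ¬ p.2 < lam p.1 → T p = 0) ∧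
    (∀ i j j' : ℕ, j < j' → j' < lam i → T (i, j) < T (i, j')) ∧
    (∀ i i' j : ℕ, i < i' → j < lam i' → T (i, j) < T (i', j))}


def IsS (lam : ℕ → ℕ) (n : ℕ) (T : ℕ × ℕ → ℕ) : Prop :=
    Set.BijOn T {p : ℕ × ℕ | p.2 < lam p.1} (Set.Icc 1 n) ∧
    (∀ p : ℕ × ℕ, ¬ p.2 < lam p.1 → T p = 0) ∧
    (∀ i j j' : ℕ, j < j' → j' < lam i → T (i, j) < T (i, j')) ∧
    (∀ i i' j : ℕ, i < i' → j < lam i' → T (i, j) < T (i', j))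

theorem numSYT_eq (lam : ℕ → ℕ) (n : ℕ) : numSYT lam n = {T | IsS lam n T}.ncard := rfl

theorem isS_insert {lam : ℕ → ℕ} {n i m : ℕ} {T : ℕ × ℕ → ℕ} (hl : Antitone lam)
    (hm : lam i = m + 1) (hi : lam (i + 1) ≤ m) (h : IsS (Function.update lam i m) n T) :
    IsS lam (n + 1) (Function.update T (i, m) (n + 1)) := by
  obtain ⟨⟨h1, h2, h3⟩, h4, h5, h6⟩ := h
  have hmem : ∀ a b, b < lam a → (a, b) ≠ (i, m) → b < Function.update lam i m a := by
    intro a b hab hne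
    by_cases ha : a = i
    · subst ha
      simp at hne ⊢
      omega
    · simpa [Function.update_of_ne ha] using hab
  have hmem' : ∀ a b, b < Function.update lam i m a → b < lam a ∧ (a, b) ≠ (i, m) := by
    intro a b hab
    by_cases ha : a = i
    · subst ha
      simp at hab ⊢
      omega
    · simp [Function.update_of_ne ha] at hab
      simp [ha, hab]
  have hb : ∀ a b, b < lam a → (a, b) ≠ (i, m) → 1 ≤ T (a, b) ∧ T (a, b) ≤ n := by
    intro a b hab hne
    exact h1 (show (a, b) ∈ {p : ℕ × ℕ | p.2 < Function.update lam i m p.1} from hmem a b hab hne)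
  refine ⟨⟨?_, ?_, ?_⟩, ?_, ?_, ?_⟩
  · rintro ⟨a, b⟩ hab
    by_cases hne : (a, b) = (i, m)
    · simp [hne]
    · rw [Function.update_of_ne hne]
      have := hb a b hab hne
      simp; omega
  · rintro ⟨a, b⟩ hab ⟨a', b'⟩ hab' he
    by_cases hne : (a, b) = (i, m)
    · by_cases hne' : (a', b') = (i, m)
      · rw [hne, hne']
      · rw [Function.update_of_ne hne', hne, Function.update_self] at he
        have := hb a' b' hab' hne'
        omega
    · by_cases hne' : (a', b') = (i, m)
      · rw [Function.update_of_ne hne, hne', Function.update_self] at he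
        have := hb a b hab hne
        omega
      · rw [Function.update_of_ne hne, Function.update_of_ne hne'] at he
        exact h2 (hmem a b hab hne) (hmem a' b' hab' hne') he
  · intro y hy
    by_cases hyn : y = n + 1
    · exact ⟨(i, m), by simp [hm], by simp [hyn]⟩
    · have : y ∈ Set.Icc 1 n := by
        simp at hy ⊢; omega
      obtain ⟨⟨a, b⟩, hp, hpe⟩ := h3 this
      have := hmem' a b hp
      exact ⟨(a, b), this.1, by rw [Function.update_of_ne this.2, hpe]⟩
  · rintro ⟨a, b⟩ hab
    have hne : (a, b) ≠ (i, m) := by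
      rintro he
      simp at he hab
      rw [he.1, he.2] at hab
      omega
    rw [Function.update_of_ne hne]
    apply h4
    intro hc
    exact hab (hmem' a b hc).1
  · intro a j j' hj hj'
    have hne : (a, j) ≠ (i, m) := by
      intro he
      simp at he
      rw [he.1] at hj'
      omega
    rw [Function.update_of_ne hne]
    by_cases hne' : (a, j') = (i, m)
    · rw [hne', Function.update_self]
      have := hb a j (by omega) hne
      omega
    · rw [Function.update_of_ne hne']
      exact h5 _ _ _ hj (hmem _ _ hj' hne')
  · intro a a' j ha hj
    have hne : (a, j) ≠ (i, m) := by
      intro he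
      simp at he
      rw [he.1] at ha
      have := hl (show i + 1 ≤ a' by omega)
      omega
    have := hl ha.le
    rw [Function.update_of_ne hne]
    by_cases hne' : (a', j) = (i, m)
    · rw [hne', Function.update_self]
      have := hb a j (by omega) hne
      omega
    · rw [Function.update_of_ne hne']
      exact h6 _ _ _ ha (hmem _ _ hj hne')

theorem isS_remove {lam : ℕ → ℕ} {n : ℕ} {T : ℕ × ℕ → ℕ}
    (h : IsS lam (n + 1) T) :
    ∃ i m, lam i = m + 1 ∧ lam (i + 1) ≤ m ∧ T (i, m) = n + 1 ∧
      IsS (Function.update lam i m) n (Function.update T (i, m) 0) := by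
  obtain ⟨⟨h1, h2, h3⟩, h4, h5, h6⟩ := h
  obtain ⟨⟨i, m⟩, hp, hT⟩ := h3 (show n + 1 ∈ Set.Icc 1 (n + 1) by simp)
  have hp' : m < lam i := hp
  have hm : lam i = m + 1 := by
    by_contra hc
    have h7 := h5 i m (m + 1) (by omega) (by omega)
    have h8 := h1 (show (i, m + 1) ∈ {p : ℕ × ℕ | p.2 < lam p.1} by simp; omega)
    simp at h8
    omega
  have hi : lam (i + 1) ≤ m := by
    by_contra hc
    have h7 := h6 i (i + 1) m (by omega) (by omega)
    have h8 := h1 (show (i + 1, m) ∈ {p : ℕ × ℕ | p.2 < lam p.1} by simp; omega)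
    simp at h8
    omega
  have hmem : ∀ a b, b < lam a → (a, b) ≠ (i, m) → b < Function.update lam i m a := by
    intro a b hab hne
    by_cases ha : a = i
    · subst ha
      simp at hne ⊢
      omega
    · simpa [Function.update_of_ne ha] using hab
  have hmem' : ∀ a b, b < Function.update lam i m a → b < lam a ∧ (a, b) ≠ (i, m) := by
    intro a b hab
    by_cases ha : a = i
    · subst ha
      simp at hab ⊢
      omega
    · simp [Function.update_of_ne ha] at hab
      simp [ha, hab]
  refine ⟨i, m, hm, hi, hT, ⟨?_, ?_, ?_⟩, ?_, ?_, ?_⟩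
  · rintro ⟨a, b⟩ hab
    obtain ⟨hab1, hne⟩ := hmem' a b hab
    rw [Function.update_of_ne hne]
    have h8 := h1 (show (a, b) ∈ {p : ℕ × ℕ | p.2 < lam p.1} from hab1)
    have h9 : T (a, b) ≠ n + 1 := by
      intro he
      exact hne (h2 hab1 hp (he.trans hT.symm))
    simp at h8 ⊢
    omega
  · rintro ⟨a, b⟩ hab ⟨a', b'⟩ hab' he
    obtain ⟨hab1, hne⟩ := hmem' a b hab
    obtain ⟨hab1', hne'⟩ := hmem' a' b' hab'
    rw [Function.update_of_ne hne, Function.update_of_ne hne'] at he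
    exact h2 hab1 hab1' he
  · intro y hy
    simp at hy
    obtain ⟨⟨a, b⟩, hq, hqe⟩ := h3 (show y ∈ Set.Icc 1 (n + 1) by simp; omega)
    have hne : (a, b) ≠ (i, m) := by
      intro he
      rw [he] at hqe
      omega
    exact ⟨(a, b), hmem a b hq hne, by rw [Function.update_of_ne hne, hqe]⟩
  · rintro ⟨a, b⟩ hab
    by_cases hne : (a, b) = (i, m)
    · rw [hne, Function.update_self]
    · rw [Function.update_of_ne hne]
      apply h4
      intro hc
      exact hab (hmem a b hc hne)
  · intro a j j' hj hj'
    obtain ⟨h7, hne'⟩ := hmem' _ _ hj'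
    have hne := (hmem' a j (by omega)).2
    rw [Function.update_of_ne hne, Function.update_of_ne hne']
    exact h5 _ _ _ hj h7
  · intro a a' j ha hj
    obtain ⟨h7, hne'⟩ := hmem' _ _ hj
    rw [Function.update_of_ne hne']
    by_cases hne : (a, j) = (i, m)
    · rw [hne, Function.update_self]
      have h8 := h1 (show (a', j) ∈ {p : ℕ × ℕ | p.2 < lam p.1} from h7)
      simp at h8
      omega
    · rw [Function.update_of_ne hne]
      exact h6 _ _ _ ha h7

def sh (a b c : ℕ) : ℕ → ℕ := fun i => if i = 0 then a else if i = 1 then b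
            else if i = 2 then c else 0

theorem sh_anti {a b c : ℕ} (h : b ≤ a) (h' : c ≤ b) : Antitone (sh a b c) := by
  apply antitone_nat_of_succ_le
  intro n
  rcases n with _ | _ | _ | n <;> simp [sh, h, h']

def SS (a b c n : ℕ) : Set (ℕ × ℕ → ℕ) := {T | IsS (sh a b c) n T}

theorem upd0 (a b c m : ℕ) : Function.update (sh a b c) 0 m = sh m b c := by
  funext i
  rcases i with _ | _ | _ | n <;> simp [sh, Function.update]
theorem upd1 (a b c m : ℕ) : Function.update (sh a b c) 1 m = sh a m c := by
  funext i
  rcases i with _ | _ | _ | n <;> simp [sh, Function.update]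
theorem upd2 (a b c m : ℕ) : Function.update (sh a b c) 2 m = sh a b m := by
  funext i
  rcases i with _ | _ | _ | n <;> simp [sh, Function.update]

def ins (i m n : ℕ) (T : ℕ × ℕ → ℕ) : ℕ × ℕ → ℕ := Function.update T (i, m) (n + 1)

theorem SS_succ {a b c n : ℕ} (h : b ≤ a) (h' : c ≤ b) :
    SS a b c (n + 1) = ((if b < a then ins 0 (a - 1) n '' SS (a - 1) b c n else ∅) ∪
      (if c < b then ins 1 (b - 1) n '' SS a (b - 1) c n else ∅)) ∪
      (if 0 < c then ins 2 (c - 1) n '' SS a b (c - 1) n else ∅) := by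
  ext T
  constructor
  · intro hT
    obtain ⟨i, m, hm, hi, hTm, hS⟩ := isS_remove hT
    have key : T = ins i m n (Function.update T (i, m) 0) := by
      simp [ins, ← hTm]
    rcases i with _ | _ | _ | i
    · left; left
      simp [sh] at hm hi
      rw [if_pos (by omega)]
      refine ⟨Function.update T (0, m) 0, ?_, ?_⟩
      rotate_left
      · rw [show a - 1 = m by omega]; exact key.symm
      · rw [upd0] at hS
        rw [show a - 1 = m by omega]; exact hS
    · left; right
      simp [sh] at hm hi
      rw [if_pos (by omega)]
      refine ⟨Function.update T (1, m) 0, ?_, ?_⟩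
      rotate_left
      · rw [show b - 1 = m by omega]; exact key.symm
      · rw [zero_add, upd1] at hS
        rw [show b - 1 = m by omega]; exact hS
    · right
      simp [sh] at hm hi
      rw [if_pos (by omega)]
      refine ⟨Function.update T (2, m) 0, ?_, ?_⟩
      rotate_left
      · rw [show c - 1 = m by omega]; exact key.symm
      · rw [show 0 + 1 + 1 = 2 by rfl, upd2] at hS
        rw [show c - 1 = m by omega]; exact hS
    · simp [sh] at hm
  · rintro ((hT | hT) | hT)
    · split_ifs at hT with hc
      · obtain ⟨U, hU, rfl⟩ := hT
        refine isS_insert (sh_anti h h') ?_ ?_ ?_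
        · simp [sh]; omega
        · simp [sh]; omega
        · rw [upd0]; exact hU
      · simp at hT
    · split_ifs at hT with hc
      · obtain ⟨U, hU, rfl⟩ := hT
        refine isS_insert (sh_anti h h') ?_ ?_ ?_
        · simp [sh]; omega
        · simp [sh]; omega
        · rw [upd1]; exact hU
      · simp at hT
    · split_ifs at hT with hc
      · obtain ⟨U, hU, rfl⟩ := hT
        refine isS_insert (sh_anti h h') ?_ ?_ ?_
        · simp [sh]; omega
        · simp [sh]
        · rw [upd2]; exact hU
      · simp at hT

theorem SS_zero : SS 0 0 0 0 = {fun _ => 0} := by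
  have hz : ∀ i, sh 0 0 0 i = 0 := by intro i; simp [sh]
  ext T
  simp only [SS, Set.mem_setOf_eq, Set.mem_singleton_iff, IsS, hz]
  constructor
  · rintro ⟨-, h, -⟩
    funext p
    exact h p (by simp)
  · rintro rfl
    simp

theorem SS_finite (n : ℕ) : ∀ a b c, b ≤ a → c ≤ b → (SS a b c n).Finite := by
  induction n with
  | zero =>
    intro a b c h h'
    apply Set.Finite.subset (Set.finite_singleton (fun _ => 0))
    rintro T ⟨⟨h1, -⟩, h4, -⟩
    funext p
    apply h4
    intro hp
    have := h1 hp
    simp at this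
  | succ n ih =>
    intro a b c h h'
    rw [SS_succ h h']
    refine Set.Finite.union (Set.Finite.union ?_ ?_) ?_
    · split_ifs
      · exact (ih _ _ _ (by omega) (by omega)).image _
      · exact Set.finite_empty
    · split_ifs
      · exact (ih _ _ _ (by omega) (by omega)).image _
      · exact Set.finite_empty
    · split_ifs
      · exact (ih _ _ _ (by omega) (by omega)).image _
      · exact Set.finite_empty

theorem isS_le {lam : ℕ → ℕ} {n : ℕ} {T : ℕ × ℕ → ℕ} (h : IsS lam n T) (p : ℕ × ℕ) : T p ≤ n := by
  by_cases hp : p.2 < lam p.1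
  · exact (h.1.1 hp).2
  · simp [h.2.1 p hp]

theorem ins_inj {lam : ℕ → ℕ} {i m n k : ℕ} (hm : lam i = m) :
    Set.InjOn (ins i m n) {T | IsS lam k T} := by
  intro T hT U hU he
  funext p
  by_cases hp : p = (i, m)
  · subst hp
    rw [hT.2.1 _ (by simp [hm]), hU.2.1 _ (by simp [hm])]
  · have := congrFun he p
    simpa [ins, Function.update_of_ne hp] using this

theorem ins_disj {lam lam' : ℕ → ℕ} {i m i' m' n : ℕ} (hne : i ≠ i') :
    Disjoint (ins i m n '' {T | IsS lam n T}) (ins i' m' n '' {T | IsS lam' n T}) := by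
  rw [Set.disjoint_left]
  rintro _ ⟨T, hT, rfl⟩ ⟨U, hU, he⟩
  have := congrFun he (i, m)
  simp [ins, hne] at this
  have := isS_le hU (i, m)
  omega

def f (a b c n : ℕ) : ℕ := (SS a b c n).ncard

theorem f_succ {a b c n : ℕ} (h : b ≤ a) (h' : c ≤ b) :
    f a b c (n + 1) = (if b < a then f (a - 1) b c n else 0) +
      (if c < b then f a (b - 1) c n else 0) + (if 0 < c then f a b (c - 1) n else 0) := by
  have n0 : (if b < a then ins 0 (a - 1) n '' SS (a - 1) b c n else ∅).ncard =
      (if b < a then f (a - 1) b c n else 0) := by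
    split_ifs
    · exact Set.InjOn.ncard_image (ins_inj (by simp [sh]))
    · simp
  have n1 : (if c < b then ins 1 (b - 1) n '' SS a (b - 1) c n else ∅).ncard =
      (if c < b then f a (b - 1) c n else 0) := by
    split_ifs
    · exact Set.InjOn.ncard_image (ins_inj (by simp [sh]))
    · simp
  have n2 : (if 0 < c then ins 2 (c - 1) n '' SS a b (c - 1) n else ∅).ncard =
      (if 0 < c then f a b (c - 1) n else 0) := by
    split_ifs
    · exact Set.InjOn.ncard_image (ins_inj (by simp [sh]))
    · simp
  have hfin := SS_finite (n + 1) a b c h h'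
  rw [SS_succ h h'] at hfin
  have hf1 := hfin.subset Set.subset_union_left
  unfold f at *
  rw [SS_succ h h', Set.ncard_union_eq _ hf1 (hfin.subset Set.subset_union_right),
    Set.ncard_union_eq _ (hf1.subset Set.subset_union_left) (hf1.subset Set.subset_union_right),
    n0, n1, n2]
  · split_ifs <;> first | exact ins_disj (by simp) | simp
  · rw [Set.disjoint_union_left]
    constructor
    · split_ifs <;> first | exact ins_disj (by simp) | simp
    · split_ifs <;> first | exact ins_disj (by simp) | simp

def F : ℕ → ℤ → ℤ
  | 0, j => j.tdiv 2
  | n + 1, j => F n (j - 1) + F n j + F n (j + 1)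

theorem F_neg (n : ℕ) : ∀ j, F n (-j) = - F n j := by
  induction n with
  | zero => intro j; simp [F]
  | succ n ih =>
    intro j
    simp only [F]
    rw [show -j - 1 = -(j + 1) by ring, show -j + 1 = -(j - 1) by ring, ih, ih, ih]
    ring

theorem F_zero (n : ℕ) : F n 0 = 0 := by
  have := F_neg n 0
  simp at this
  omega

def G (m : ℕ) (a b c : ℕ) : ℤ := F m (a - c + 2) - F m (a - b + 1) - F m (b - c + 1)

theorem G_zero {a b c : ℕ} (h : b ≤ a) (h' : c ≤ b) :
    G 0 a b c = if a % 2 = b % 2 ∧ b % 2 = c % 2 then 1 else 0 := by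
  obtain ⟨x, rfl⟩ := Nat.exists_eq_add_of_le h'
  obtain ⟨y, rfl⟩ := Nat.exists_eq_add_of_le h
  simp only [G, F]
  rw [Int.tdiv_eq_ediv_of_nonneg (by push_cast; omega),
    Int.tdiv_eq_ediv_of_nonneg (by push_cast; omega),
    Int.tdiv_eq_ediv_of_nonneg (by push_cast; omega)]
  push_cast
  split_ifs <;> omega

theorem G_succ (m : ℕ) {a b c : ℕ} (h : b ≤ a) (h' : c ≤ b) :
    G (m + 1) a b c = G m (a + 1) b c + (if b < a then G m a (b + 1) c else 0) +
      (if c < b then G m a b (c + 1) else 0) := by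
  have e1 : (if b < a then G m a (b + 1) c else 0) = G m a (b + 1) c := by
    split_ifs with hc
    · rfl
    · obtain rfl : a = b := by omega
      simp only [G]
      push_cast
      rw [show (a : ℤ) - (a + 1) + 1 = 0 by ring, F_zero,
        show (a : ℤ) + 1 - c + 1 = a - c + 2 by ring]
      ring
  have e2 : (if c < b then G m a b (c + 1) else 0) = G m a b (c + 1) := by
    split_ifs with hc
    · rfl
    · obtain rfl : b = c := by omega
      simp only [G]
      push_cast
      rw [show (b : ℤ) - (b + 1) + 1 = 0 by ring, F_zero,
        show (a : ℤ) - (b + 1) + 2 = a - b + 1 by ring]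
      ring
  rw [e1, e2]
  simp only [G, F]
  push_cast
  ring_nf

def P (n : ℕ) : Finset (ℕ × ℕ × ℕ) :=
  (Finset.range (n + 1) ×ˢ Finset.range (n + 1) ×ˢ Finset.range (n + 1)).filter
    (fun lam => lam.2.1 ≤ lam.1 ∧ lam.2.2 ≤ lam.2.1 ∧ lam.1 + lam.2.1 + lam.2.2 = n)

theorem mem_P {n a b c : ℕ} : (a, b, c) ∈ P n ↔ b ≤ a ∧ c ≤ b ∧ a + b + c = n := by
  simp [P]; omega

theorem W_step (k m : ℕ) :
    ∑ x ∈ P (k + 1), (f x.1 x.2.1 x.2.2 (k + 1) : ℤ) * G m x.1 x.2.1 x.2.2 =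
    ∑ x ∈ P k, (f x.1 x.2.1 x.2.2 k : ℤ) * G (m + 1) x.1 x.2.1 x.2.2 := by
  have l : ∑ x ∈ P (k + 1), (f x.1 x.2.1 x.2.2 (k + 1) : ℤ) * G m x.1 x.2.1 x.2.2 =
     ∑ x ∈ (P (k + 1)).filter (fun x => x.2.1 < x.1), (f (x.1 - 1) x.2.1 x.2.2 k : ℤ) * G m x.1 x.2.1 x.2.2
     + ∑ x ∈ (P (k + 1)).filter (fun x => x.2.2 < x.2.1), (f x.1 (x.2.1 - 1) x.2.2 k : ℤ) * G m x.1 x.2.1 x.2.2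
     + ∑ x ∈ (P (k + 1)).filter (fun x => 0 < x.2.2), (f x.1 x.2.1 (x.2.2 - 1) k : ℤ) * G m x.1 x.2.1 x.2.2 := by
    simp only [Finset.sum_filter]
    rw [← Finset.sum_add_distrib, ← Finset.sum_add_distrib]
    apply Finset.sum_congr rfl
    rintro ⟨a, b, c⟩ hx
    rw [mem_P] at hx
    simp only
    rw [f_succ hx.1 hx.2.1]
    push_cast
    simp only [add_mul, ite_mul, zero_mul]
  have r : ∑ x ∈ P k, (f x.1 x.2.1 x.2.2 k : ℤ) * G (m + 1) x.1 x.2.1 x.2.2 =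
     ∑ x ∈ P k, (f x.1 x.2.1 x.2.2 k : ℤ) * G m (x.1 + 1) x.2.1 x.2.2
     + ∑ x ∈ (P k).filter (fun x => x.2.1 < x.1), (f x.1 x.2.1 x.2.2 k : ℤ) * G m x.1 (x.2.1 + 1) x.2.2
     + ∑ x ∈ (P k).filter (fun x => x.2.2 < x.2.1), (f x.1 x.2.1 x.2.2 k : ℤ) * G m x.1 x.2.1 (x.2.2 + 1) := by
    simp only [Finset.sum_filter]
    rw [← Finset.sum_add_distrib, ← Finset.sum_add_distrib]
    apply Finset.sum_congr rfl
    rintro ⟨a, b, c⟩ hx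
    rw [mem_P] at hx
    simp only
    rw [G_succ m hx.1 hx.2.1]
    simp only [mul_add, mul_ite, mul_zero]
  rw [l, r]
  congr 1
  · congr 1
    · refine Finset.sum_nbij' (fun x => (x.1 - 1, x.2)) (fun x => (x.1 + 1, x.2)) ?_ ?_ ?_ ?_ ?_
      all_goals
        rintro ⟨a, b, c⟩ hx
        simp only [Finset.mem_filter, mem_P] at hx ⊢
      · omega
      · omega
      · rw [Nat.sub_add_cancel (by omega)]
      · simp
      · rw [Nat.sub_add_cancel (by omega)]
    · refine Finset.sum_nbij' (fun x => (x.1, x.2.1 - 1, x.2.2)) (fun x => (x.1, x.2.1 + 1, x.2.2)) ?_ ?_ ?_ ?_ ?_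
      all_goals
        rintro ⟨a, b, c⟩ hx
        simp only [Finset.mem_filter, mem_P] at hx ⊢
      · omega
      · omega
      · rw [Nat.sub_add_cancel (by omega)]
      · simp
      · rw [Nat.sub_add_cancel (by omega)]
  · refine Finset.sum_nbij' (fun x => (x.1, x.2.1, x.2.2 - 1)) (fun x => (x.1, x.2.1, x.2.2 + 1)) ?_ ?_ ?_ ?_ ?_
    all_goals
      rintro ⟨a, b, c⟩ hx
      simp only [Finset.mem_filter, mem_P] at hx ⊢
    · omega
    · omega
    · rw [Nat.sub_add_cancel (by omega)]
    · simp
    · rw [Nat.sub_add_cancel (by omega)]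

theorem W_all (k : ℕ) : ∀ m,
    ∑ x ∈ P k, (f x.1 x.2.1 x.2.2 k : ℤ) * G m x.1 x.2.1 x.2.2 = G (m + k) 0 0 0 := by
  induction k with
  | zero =>
    intro m
    have : P 0 = {(0, 0, 0)} := by
      ext ⟨a, b, c⟩
      rw [mem_P]
      simp; omega
    rw [this]
    simp [f, SS_zero]
  | succ k ih =>
    intro m
    rw [W_step, ih, show m + 1 + k = m + (k + 1) by ring]

def t : ℕ → ℤ → ℤ
  | 0, j => if j = 0 then 1 else 0
  | n + 1, j => t n (j - 1) + t n j + t n (j + 1)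

theorem t_neg (n : ℕ) : ∀ j, t n (-j) = t n j := by
  induction n with
  | zero => intro j; simp [t]
  | succ n ih =>
    intro j
    simp only [t]
    rw [show -j - 1 = -(j + 1) by ring, show -j + 1 = -(j - 1) by ring, ih, ih, ih]
    ring

theorem t_der (n : ℕ) : ∀ j, j * t (n + 1) j = (n + 1) * (t n (j - 1) - t n (j + 1)) := by
  induction n with
  | zero =>
    intro j
    simp only [t]
    by_cases h1 : j = 1
    · subst h1; simp
    by_cases h2 : j = -1
    · subst h2; simp
    by_cases h3 : j = 0
    · subst h3; simp
    rw [if_neg (by omega), if_neg (by omega), if_neg (by omega)]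
    simp
  | succ n ih =>
    intro j
    have a1 := ih (j - 1)
    have a2 := ih j
    have a3 := ih (j + 1)
    have b1 : t (n + 1) (j - 1) = t n (j - 1 - 1) + t n (j - 1) + t n (j - 1 + 1) := rfl
    have b3 : t (n + 1) (j + 1) = t n (j + 1 - 1) + t n (j + 1) + t n (j + 1 + 1) := rfl
    have b : t (n + 2) j = t (n + 1) (j - 1) + t (n + 1) j + t (n + 1) (j + 1) := rfl
    rw [show j - 1 + 1 = j by ring] at *
    rw [show j + 1 - 1 = j by ring] at *
    rw [b]
    push_cast
    linear_combination a1 + a2 + a3 - (n + 1 : ℤ) * (b1 - b3)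

theorem FD (n : ℕ) : ∀ j, F n (j + 2) - F n (j + 1) - F n j + F n (j - 1) = t n j - t n (j + 1) := by
  induction n with
  | zero =>
    intro j
    simp only [F, t]
    rcases lt_trichotomy j 0 with h | h | h
    · obtain ⟨k, rfl⟩ : ∃ k : ℤ, j = - k := ⟨-j, by ring⟩
      rw [show -k + 2 = -(k - 2) by ring, show -k + 1 = -(k - 1) by ring,
        show -k - 1 = -(k + 1) by ring]
      simp only [Int.neg_tdiv]
      by_cases h1 : k = 1
      · subst h1; decide
      rw [Int.tdiv_eq_ediv_of_nonneg (by omega), Int.tdiv_eq_ediv_of_nonneg (by omega),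
        Int.tdiv_eq_ediv_of_nonneg (by omega), Int.tdiv_eq_ediv_of_nonneg (by omega)]
      rw [if_neg (by omega), if_neg (by omega)]
      omega
    · subst h; decide
    · rw [Int.tdiv_eq_ediv_of_nonneg (by omega), Int.tdiv_eq_ediv_of_nonneg (by omega),
        Int.tdiv_eq_ediv_of_nonneg (by omega), Int.tdiv_eq_ediv_of_nonneg (by omega)]
      rw [if_neg (by omega), if_neg (by omega)]
      omega
  | succ n ih =>
    intro j
    have a1 := ih (j - 1)
    have a2 := ih j
    have a3 := ih (j + 1)
    simp only [F, t]
    ring_nf at *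
    linarith

theorem G_eq (n : ℕ) : G n 0 0 0 = t n 0 - t n 1 := by
  have h := FD n 0
  have h1 := F_neg n 1
  have h2 := F_zero n
  simp only [G]
  norm_num at *
  linarith

theorem t_zero_succ (n : ℕ) : t (n + 1) 0 = t n 0 + 2 * t n 1 := by
  have := t_neg n 1
  simp only [t]
  norm_num
  rw [this]; ring

theorem t_one_succ (n : ℕ) : ((n : ℤ) + 2) * t (n + 1) 1 = (2 * n + 2) * t n 0 + (n + 1) * t n 1 := by
  have h := t_der n 1
  have h2 : t (n + 1) 1 = t n 0 + t n 1 + t n 2 := by simp only [t]; norm_num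
  norm_num at h
  linear_combination h + (n + 1 : ℤ) * h2

theorem a_rec (n : ℕ) : ((n : ℤ) + 3) * G (n + 2) 0 0 0 =
    (n + 1) * (2 * G (n + 1) 0 0 0 + 3 * G n 0 0 0) := by
  simp only [G_eq]
  have h1 := t_zero_succ n
  have h2 := t_zero_succ (n + 1)
  have h3 := t_one_succ n
  have h4 := t_one_succ (n + 1)
  push_cast at h4
  have e : ((n : ℤ) + 2) ≠ 0 := by positivity
  apply mul_left_cancel₀ e
  rw [show n + 2 = n + 1 + 1 by rfl]
  rw [h2]
  rw [h1] at *
  linear_combination (-(n + 2 : ℤ)) * h4 + (3 * n + 6 : ℤ) * h3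

theorem R_eq (R : ℕ → ℕ) (hR2 : R 2 = 1) (hR3 : R 3 = 1)
    (hRrec : ∀ n, 4 ≤ n → (n + 1) * R n = (n - 1) * (2 * R (n - 1) + 3 * R (n - 2))) (n : ℕ) :
    (R (n + 2) : ℤ) = G (n + 2) 0 0 0 ∧ (R (n + 3) : ℤ) = G (n + 3) 0 0 0 := by
  induction n with
  | zero => 
    rw [hR2, hR3]
    decide
  | succ n ih =>
    refine ⟨ih.2, ?_⟩
    have h := hRrec (n + 4) (by omega)
    have h' := a_rec (n + 2)
    rw [show n + 4 - 1 = n + 3 by omega, show n + 4 - 2 = n + 2 by omega] at h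
    have h2 : ((n : ℤ) + 5) * R (n + 4) = (n + 3) * (2 * R (n + 3) + 3 * R (n + 2)) := by
      have : ((n + 4 + 1 : ℕ) : ℤ) * R (n + 4) = ((n + 3 : ℕ) : ℤ) * (2 * R (n + 3) + 3 * R (n + 2)) := by
        exact_mod_cast h
      push_cast at this
      linear_combination this
    rw [ih.1, ih.2] at h2
    push_cast at h'
    have e : ((n : ℤ) + 5) ≠ 0 := by positivity
    apply mul_left_cancel₀ e
    rw [show n + 1 + 3 = n + 4 by ring, h2]
    rw [show n + 2 + 2 = n + 4 by ring, show n + 2 + 1 = n + 3 by ring] at h'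
    linear_combination -h'

theorem riordan_eq_sum_syt
    (R : ℕ → ℕ) (hR2 : R 2 = 1) (hR3 : R 3 = 1)
    (hRrec : ∀ n, 4 ≤ n → (n + 1) * R n = (n - 1) * (2 * R (n - 1) + 3 * R (n - 2))) :
    ∀ n, 2 ≤ n →
      R n =
        ∑ lam ∈ (Finset.range (n + 1) ×ˢ Finset.range (n + 1) ×ˢ
            Finset.range (n + 1)).filter
            (fun lam => lam.2.1 ≤ lam.1 ∧ lam.2.2 ≤ lam.2.1 ∧
              lam.1 + lam.2.1 + lam.2.2 = n ∧
              lam.1 % 2 = lam.2.1 % 2 ∧ lam.2.1 % 2 = lam.2.2 % 2),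
          numSYT (fun i => if i = 0 then lam.1 else if i = 1 then lam.2.1
            else if i = 2 then lam.2.2 else 0) n := by
  intro n hn
  obtain ⟨k, rfl⟩ := Nat.exists_eq_add_of_le' hn
  have h1 := (R_eq R hR2 hR3 hRrec k).1
  have h2 := W_all (k + 2) 0
  rw [zero_add, ← h1] at h2
  apply Nat.cast_injective (R := ℤ)
  rw [← h2, Nat.cast_sum]
  have h3 : (Finset.range (k + 2 + 1) ×ˢ Finset.range (k + 2 + 1) ×ˢ
      Finset.range (k + 2 + 1)).filter
      (fun lam => lam.2.1 ≤ lam.1 ∧ lam.2.2 ≤ lam.2.1 ∧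
        lam.1 + lam.2.1 + lam.2.2 = k + 2 ∧
        lam.1 % 2 = lam.2.1 % 2 ∧ lam.2.1 % 2 = lam.2.2 % 2) =
      (P (k + 2)).filter (fun lam => lam.1 % 2 = lam.2.1 % 2 ∧ lam.2.1 % 2 = lam.2.2 % 2) := by
    rw [P, Finset.filter_filter]
    congr 1
    funext x
    simp only [and_assoc]
  rw [h3, Finset.sum_filter]
  apply Finset.sum_congr rfl
  rintro ⟨a, b, c⟩ hx
  rw [mem_P] at hx
  simp only
  rw [G_zero hx.1 hx.2.1, mul_ite, mul_one, mul_zero]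
  rfl
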